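/- Let A generate an α-times resolvent family {S_α(t)}_{t≥0} on X, where 1 < α < 2, and let r > 0. If S_α(·) is of bounded semivariation on [0,r], then P_α(t)x ∈ D(A) for every x ∈ X and every t ∈ [0,r], and sup_{t∈[0,r]} ‖t A P_α(t)‖ < ∞, i.e. there is a constant M such that ‖t A(P_α(t)x)‖ ≤ M ‖x‖ for all x ∈ X and t ∈ [0,r]. -/

import Mathlib

open MeasureTheory Set

/-- `g β t = t^(β-1)/Γ(β)`. -/
noncomputable def g (β t : ℝ) : ℝ := t ^ (β - 1) / Real.Gamma β

/-- `Pa α S t x = (g_{α-1} * S)(t) x = ∫_0^t g_{α-1}(t-s) S(s) x ds`. -/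
noncomputable def Pa {X : Type*} [NormedAddCommGroup X] [NormedSpace ℂ X]
    (α : ℝ) (S : ℝ → X →L[ℂ] X) (t : ℝ) (x : X) : X :=
  ∫ s in (0:ℝ)..t, g (α - 1) (t - s) • S s x

/-- `G` is of bounded semivariation on `[0, r]`: the quantities
`‖∑ (G(d_{i+1}) - G(d_i)) x_i‖` over all partitions `0 = d_0 < ⋯ < d_n = r`
and all vectors of norm at most one are uniformly bounded. -/
def BoundedSemivariation {X : Type*} [NormedAddCommGroup X] [NormedSpace ℂ X]
    (G : ℝ → X →L[ℂ] X) (r : ℝ) : Prop :=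
  ∃ C : ℝ, ∀ (n : ℕ) (d : ℕ → ℝ) (x : ℕ → X),
    d 0 = 0 → d n = r → (∀ i < n, d i < d (i + 1)) → (∀ i, ‖x i‖ ≤ 1) →
    ‖∑ i ∈ Finset.range n, (G (d (i + 1)) - G (d i)) (x i)‖ ≤ C

/-!
For `y ∈ D(A)`, the function `v(t) = t S(t)y + (α - 1) ∫_0^t S(s)y ds` satisfies
`v - g_α * A v = α ∫_0^t S(s)y ds`, because `t g_α(t) = α g_{α+1}(t)`. Variation of constants
therefore gives `v = α (S * S y)`. Since `S(·)y` has derivative `P_α(·)A y`, the derivative of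
`S * S y` at `t` is `S(t)y + (t / α) P_α(t)A y`.

The difference quotients of `S * S y` are, up to the boundary term `S(t)y`, averages of
Riemann-Stieltjes sums of `S` against values of `S(·)y`. Bounded semivariation thus bounds
`t P_α(t)A y` by a multiple of `‖y‖`, and closedness of `A` with density of `D(A)` carries this over
to `t A P_α(t)x` for every `x`.
-/

section CausalConvolution

variable {E : Type*} [NormedAddCommGroup E] [NormedSpace ℝ E]

theorem integral_integral_swap_simplex {F : ℝ → ℝ → E} {t : ℝ} (ht : 0 ≤ t)
    (hF : IntegrableOn F.uncurry (Icc 0 t ×ˢ Icc 0 t)) :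
    ∫ x in (0:ℝ)..t, ∫ y in (0:ℝ)..(t - x), F x y
      = ∫ y in (0:ℝ)..t, ∫ x in (0:ℝ)..(t - y), F x y := by
  let simplex : Set (ℝ × ℝ) := {p | p.1 + p.2 ≤ t}
  have swap : ∫ x in (0:ℝ)..t, ∫ y in (0:ℝ)..t, simplex.indicator F.uncurry (x, y)
      = ∫ y in (0:ℝ)..t, ∫ x in (0:ℝ)..t, simplex.indicator F.uncurry (x, y) := by
    refine intervalIntegral_intervalIntegral_swap ?_
    rw [uIoc_of_le ht]
    exact (hF.mono_set (prod_mono Ioc_subset_Icc_self Ioc_subset_Icc_self)).indicator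
      (measurableSet_le (by fun_prop) measurable_const)
  have section_eq (f : ℝ → E) {b : ℝ} (hb : b ∈ uIcc 0 t) :
      ∫ x in (0:ℝ)..t, {x | x ≤ t - b}.indicator f x = ∫ x in (0:ℝ)..(t - b), f x := by
    rw [uIcc_of_le ht] at hb
    exact intervalIntegral.integral_indicator ⟨sub_nonneg.2 hb.2, sub_le_self t hb.1⟩
  calc ∫ x in (0:ℝ)..t, ∫ y in (0:ℝ)..(t - x), F x y
      = ∫ x in (0:ℝ)..t, ∫ y in (0:ℝ)..t, simplex.indicator F.uncurry (x, y) :=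
        intervalIntegral.integral_congr fun x hx => by
          simp only [← section_eq _ hx, simplex, indicator, mem_ofPred_eq, le_sub_iff_add_le',
            Function.uncurry_apply_pair]
    _ = ∫ y in (0:ℝ)..t, ∫ x in (0:ℝ)..(t - y), F x y := swap.trans <|
        intervalIntegral.integral_congr fun y hy => by
          simp only [← section_eq _ hy, simplex, indicator, mem_ofPred_eq, le_sub_iff_add_le,
            Function.uncurry_apply_pair]

/-- The convolution `(k * h)(t) = ∫_0^t k(t-s) h(s) ds` of functions on the half-line `[0, ∞)`. -/
noncomputable def causalConv (k : ℝ → ℝ) (h : ℝ → E) (t : ℝ) : E :=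
  ∫ s in (0:ℝ)..t, k (t - s) • h s

theorem causalConv_eq_integral_smul_comp_sub (k : ℝ → ℝ) (h : ℝ → E) (t : ℝ) :
    causalConv k h t = ∫ s in (0:ℝ)..t, k s • h (t - s) := by
  simpa [causalConv] using
    (intervalIntegral.integral_comp_sub_left (fun s => k (t - s) • h s) t (a := 0) (b := t)).symm

theorem causalConv_smul {𝕜 : Type*} [NontriviallyNormedField 𝕜] [NormedSpace 𝕜 E]
    [SMulCommClass ℝ 𝕜 E] (k : ℝ → ℝ) (c : 𝕜) (h : ℝ → E) (t : ℝ) :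
    causalConv k (fun s => c • h s) t = c • causalConv k h t := by
  simp only [causalConv, smul_comm _ c, intervalIntegral.integral_smul]

variable {k : ℝ → ℝ} {h : ℝ → E} {t : ℝ}

theorem causalConv_congr {h' : ℝ → E} (hh : EqOn h h' (Icc 0 t)) (ht : 0 ≤ t) :
    causalConv k h t = causalConv k h' t :=
  intervalIntegral.integral_congr fun s hs => congrArg (k (t - s) • ·) (hh (uIcc_of_le ht ▸ hs))

theorem intervalIntegrable_comp_sub_left (hk : IntervalIntegrable k volume 0 t) :
    IntervalIntegrable (fun s => k (t - s)) volume 0 t := by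
  simpa using (hk.comp_sub_left t).symm

theorem intervalIntegrable_smul_of_comp_sub (hk : IntervalIntegrable k volume 0 t)
    (hh : Continuous h) : IntervalIntegrable (fun s => k (t - s) • h s) volume 0 t :=
  (intervalIntegrable_comp_sub_left hk).smul_continuousOn hh.continuousOn

theorem causalConv_add {h₁ h₂ : ℝ → E} (hk : IntervalIntegrable k volume 0 t)
    (hh₁ : Continuous h₁) (hh₂ : Continuous h₂) :
    causalConv k (fun s => h₁ s + h₂ s) t = causalConv k h₁ t + causalConv k h₂ t := by
  simp only [causalConv, smul_add]
  exact intervalIntegral.integral_add (intervalIntegrable_smul_of_comp_sub hk hh₁)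
    (intervalIntegrable_smul_of_comp_sub hk hh₂)

theorem continuous_causalConv (hk : ∀ a b, IntervalIntegrable k volume a b)
    (hh : Continuous h) : Continuous (causalConv k h) := by
  simp only [funext (causalConv_eq_integral_smul_comp_sub k h)]
  rw [continuous_iff_continuousAt]
  intro t₀
  set R : ℝ := |t₀| + 1
  have hR : t₀ ∈ Ioo (-R) R := abs_lt.1 (lt_add_one _)
  obtain ⟨C, hC⟩ := (isCompact_Icc (a := -R - R) (b := R + R)).exists_bound_of_continuousOn
    hh.continuousOn
  have bound : ∀ᶠ τ in nhds t₀, ∀ᵐ s ∂volume.restrict (uIoc (-R) R),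
      ‖k s • h (τ - s)‖ ≤ ‖k s‖ * C := by
    filter_upwards [Ioo_mem_nhds hR.1 hR.2] with τ hτ
    filter_upwards [ae_restrict_mem measurableSet_uIoc] with s hs
    rw [uIoc_of_le (hR.1.trans hR.2).le] at hs
    rw [norm_smul]
    gcongr
    exact hC _ ⟨by linarith [hτ.1, hs.2], by linarith [hτ.2, hs.1]⟩
  have cont := intervalIntegral.continuousAt_parametric_primitive_of_dominated
    (F := fun τ s => k s • h (τ - s)) (fun s => ‖k s‖ * C) (-R) R
    (fun τ => (hk (-R) R).def'.aestronglyMeasurable.smul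
      (by fun_prop : Continuous fun s => h (τ - s)).aestronglyMeasurable)
    bound ((hk _ _).norm.mul_const C)
    (Filter.Eventually.of_forall fun s => by fun_prop)
    (abs_lt.1 (by rw [abs_zero]; positivity)) hR (by simp)
  exact cont.comp (f := fun τ : ℝ => (τ, τ)) (by fun_prop)

theorem integrableOn_smul_snd_Icc_prod_Icc {H : ℝ × ℝ → E}
    (hk : IntervalIntegrable k volume 0 t) (hH : Continuous H) (ht : 0 ≤ t) :
    IntegrableOn (fun p : ℝ × ℝ => k p.2 • H p) (Icc 0 t ×ˢ Icc 0 t) := by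
  refine IntegrableOn.smul_continuousOn ?_ hH.continuousOn (isCompact_Icc.prod isCompact_Icc)
  rw [IntegrableOn, Measure.volume_eq_prod, ← Measure.prod_restrict]
  exact ((intervalIntegrable_iff_integrableOn_Icc_of_le ht).1 hk).comp_snd _

end CausalConvolution

section OperatorConvolution

theorem exists_opNorm_le_of_isCompact {ι 𝕜 E F : Type*} [TopologicalSpace ι]
    [NontriviallyNormedField 𝕜] [NormedAddCommGroup E] [NormedSpace 𝕜 E] [CompleteSpace E]
    [NormedAddCommGroup F] [NormedSpace 𝕜 F] {T : ι → E →L[𝕜] F} {s : Set ι} (hs : IsCompact s)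
    (hT : ∀ x, ContinuousOn (fun t => T t x) s) : ∃ K : NNReal, ∀ t ∈ s, ‖T t‖ ≤ K := by
  obtain ⟨K, hK⟩ := banach_steinhaus (g := fun t : s => T t) fun x => by
    obtain ⟨C, hC⟩ := hs.exists_bound_of_continuousOn (hT x)
    exact ⟨C, fun t => hC t t.2⟩
  exact ⟨K.toNNReal, fun t ht => (hK ⟨t, ht⟩).trans (Real.le_coe_toNNReal K)⟩

theorem continuous_uncurry_of_strongly_continuous {ι 𝕜 E F : Type*} [TopologicalSpace ι]
    [WeaklyLocallyCompactSpace ι] [NontriviallyNormedField 𝕜] [NormedAddCommGroup E]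
    [NormedSpace 𝕜 E] [CompleteSpace E] [NormedAddCommGroup F] [NormedSpace 𝕜 F]
    {T : ι → E →L[𝕜] F} (hT : ∀ x, Continuous fun t => T t x) :
    Continuous fun p : ι × E => T p.1 p.2 := by
  rw [continuous_iff_continuousAt]
  rintro ⟨t, x⟩
  obtain ⟨s, hs, hst⟩ := exists_compact_mem_nhds t
  obtain ⟨K, hK⟩ := exists_opNorm_le_of_isCompact hs fun x => (hT x).continuousOn
  have hcont : ContinuousOn (fun p : ι × E => T p.1 p.2) (s ×ˢ univ) :=
    continuousOn_prod_of_continuousOn_lipschitzOnWith' _ K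
      (fun t ht => ((T t).lipschitz.weaken (hK t ht)).lipschitzOnWith)
      fun x _ => (hT x).continuousOn
  exact hcont.continuousAt (prod_mem_nhds hst Filter.univ_mem)

variable {𝕜 E F : Type*} [NontriviallyNormedField 𝕜] [NormedAddCommGroup E] [NormedSpace 𝕜 E]
  [NormedAddCommGroup F] [NormedSpace ℝ F] [NormedSpace 𝕜 F]

/-- The convolution `(T * f)(t) = ∫_0^t T(s) f(t-s) ds` of an operator family with a vector-valued
function on the half-line `[0, ∞)`. -/
noncomputable def operatorConv (T : ℝ → E →L[𝕜] F) (f : ℝ → E) (t : ℝ) : F :=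
  ∫ s in (0:ℝ)..t, T s (f (t - s))

theorem operatorConv_eq_integral_comp_sub (T : ℝ → E →L[𝕜] F) (f : ℝ → E) (t : ℝ) :
    operatorConv T f t = ∫ b in (0:ℝ)..t, T (t - b) (f b) := by
  simpa [operatorConv] using
    (intervalIntegral.integral_comp_sub_left (fun s => T s (f (t - s))) t (a := 0) (b := t)).symm

variable {T : ℝ → E →L[𝕜] F} {f : ℝ → E} {k : ℝ → ℝ} {t : ℝ}

theorem operatorConv_congr {f₁ f₂ : ℝ → E} (hf : EqOn f₁ f₂ (Icc 0 t)) (ht : 0 ≤ t) :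
    operatorConv T f₁ t = operatorConv T f₂ t := by
  refine intervalIntegral.integral_congr fun s hs => ?_
  rw [uIcc_of_le ht] at hs
  simp only [hf ⟨sub_nonneg.2 hs.2, sub_le_self t hs.1⟩]

theorem operatorConv_sub [CompleteSpace E] {f₁ f₂ : ℝ → E} (hT : ∀ x, Continuous fun t => T t x)
    (hf₁ : Continuous f₁) (hf₂ : Continuous f₂) (t : ℝ) :
    operatorConv T (fun s => f₁ s - f₂ s) t = operatorConv T f₁ t - operatorConv T f₂ t := by
  have hTc := continuous_uncurry_of_strongly_continuous hT
  have hint {f : ℝ → E} (hf : Continuous f) :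
      IntervalIntegrable (fun s => T s (f (t - s))) volume 0 t :=
    (hTc.comp₂ continuous_id (by fun_prop : Continuous fun s => f (t - s))).intervalIntegrable 0 t
  simp only [operatorConv, map_sub]
  exact intervalIntegral.integral_sub (hint hf₁) (hint hf₂)

theorem continuous_operatorConv [CompleteSpace E] (hT : ∀ x, Continuous fun t => T t x)
    (hf : Continuous f) : Continuous (operatorConv T f) := by
  have hTc := continuous_uncurry_of_strongly_continuous hT
  refine intervalIntegral.continuous_parametric_intervalIntegral_of_continuous ?_ continuous_id
  exact hTc.comp₂ continuous_snd (by fun_prop : Continuous fun p : ℝ × ℝ => f (p.1 - p.2))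

theorem integral_causalConv_apply [CompleteSpace E] (hT : ∀ x, Continuous fun t => T t x)
    (hk : IntervalIntegrable k volume 0 t) (hf : Continuous f) (ht : 0 ≤ t) :
    ∫ b in (0:ℝ)..t, causalConv k (fun s => T s (f b)) (t - b)
      = causalConv k (operatorConv T f) t := by
  have hTc := continuous_uncurry_of_strongly_continuous hT
  calc ∫ b in (0:ℝ)..t, causalConv k (fun s => T s (f b)) (t - b)
      = ∫ b in (0:ℝ)..t, ∫ σ in (0:ℝ)..(t - b), k σ • T (t - b - σ) (f b) := by
        simp only [causalConv_eq_integral_smul_comp_sub]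
    _ = ∫ σ in (0:ℝ)..t, ∫ b in (0:ℝ)..(t - σ), k σ • T (t - b - σ) (f b) :=
        integral_integral_swap_simplex ht <| integrableOn_smul_snd_Icc_prod_Icc hk
          (hTc.comp₂ (by fun_prop : Continuous fun p : ℝ × ℝ => t - p.1 - p.2)
            (hf.comp continuous_fst)) ht
    _ = causalConv k (operatorConv T f) t := by
        simp only [causalConv_eq_integral_smul_comp_sub, intervalIntegral.integral_smul,
          sub_right_comm t, operatorConv_eq_integral_comp_sub]

theorem exists_continuousLinearMap_eq_causalConv [SMulCommClass ℝ 𝕜 F] [CompleteSpace E]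
    (hT : ∀ x, Continuous fun t => T t x) (hk : IntervalIntegrable k volume 0 t) (ht : 0 ≤ t) :
    ∃ P : E →L[𝕜] F, ∀ x, P x = causalConv k (fun s => T s x) t := by
  obtain ⟨K, hK⟩ := exists_opNorm_le_of_isCompact (isCompact_Icc (a := 0) (b := t))
    fun x => (hT x).continuousOn
  let P : E →ₗ[𝕜] F :=
    { toFun x := causalConv k (fun s => T s x) t
      map_add' x y := by simp only [map_add, causalConv_add hk (hT x) (hT y)]
      map_smul' c x := by simp only [map_smul, causalConv_smul, RingHom.id_apply] }
  refine ⟨P.mkContinuous ((∫ s in (0:ℝ)..t, ‖k (t - s)‖) * K) fun x => ?_, fun x => rfl⟩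
  rw [mul_assoc, ← intervalIntegral.integral_mul_const]
  refine intervalIntegral.norm_integral_le_of_norm_le ht (.of_forall fun s hs => ?_)
    ((intervalIntegrable_comp_sub_left hk).norm.mul_const _)
  rw [norm_smul]
  gcongr
  exact (T s).le_of_opNorm_le (hK s (Ioc_subset_Icc_self hs)) x

end OperatorConvolution

section RealScalars

variable {𝕜 E F : Type*} [RCLike 𝕜] [NormedAddCommGroup E] [NormedSpace ℝ E] [NormedSpace 𝕜 E]
  [IsScalarTower ℝ 𝕜 E] [NormedAddCommGroup F] [NormedSpace ℝ F] [NormedSpace 𝕜 F]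
  [IsScalarTower ℝ 𝕜 F] {T : ℝ → E →L[𝕜] F} {f : ℝ → E} {k : ℝ → ℝ} {t : ℝ}

theorem operatorConv_smul (T : ℝ → E →L[𝕜] F) (c : ℝ) (f : ℝ → E) (t : ℝ) :
    operatorConv T (fun s => c • f s) t = c • operatorConv T f t := by
  simp only [operatorConv, ContinuousLinearMap.map_smul_of_tower, intervalIntegral.integral_smul]

variable [CompleteSpace E]

theorem operatorConv_causalConv [CompleteSpace F] (hT : ∀ x, Continuous fun t => T t x)
    (hk : ∀ a b, IntervalIntegrable k volume a b) (hf : Continuous f) (ht : 0 ≤ t) :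
    operatorConv T (causalConv k f) t = causalConv k (operatorConv T f) t := by
  have hTc := continuous_uncurry_of_strongly_continuous hT
  have apply_causalConv (b u : ℝ) :
      T b (causalConv k f u) = ∫ σ in (0:ℝ)..u, k σ • T b (f (u - σ)) := by
    rw [causalConv_eq_integral_smul_comp_sub, ← (T b).intervalIntegral_comp_comm
      ((hk 0 u).smul_continuousOn (by fun_prop : Continuous fun σ => f (u - σ)).continuousOn)]
    simp only [ContinuousLinearMap.map_smul_of_tower]
  calc operatorConv T (causalConv k f) t
      = ∫ b in (0:ℝ)..t, ∫ σ in (0:ℝ)..(t - b), k σ • T b (f (t - b - σ)) := by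
        simp only [operatorConv, apply_causalConv]
    _ = ∫ σ in (0:ℝ)..t, ∫ b in (0:ℝ)..(t - σ), k σ • T b (f (t - b - σ)) :=
        integral_integral_swap_simplex ht <| integrableOn_smul_snd_Icc_prod_Icc (hk 0 t)
          (hTc.comp₂ continuous_fst
            (by fun_prop : Continuous fun p : ℝ × ℝ => f (t - p.1 - p.2))) ht
    _ = causalConv k (operatorConv T f) t := by
        simp only [causalConv_eq_integral_smul_comp_sub, operatorConv,
          intervalIntegral.integral_smul, sub_right_comm t]

theorem integral_operatorConv [CompleteSpace F] (hT : ∀ x, Continuous fun t => T t x)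
    (hf : Continuous f) (ht : 0 ≤ t) :
    ∫ τ in (0:ℝ)..t, operatorConv T f τ = operatorConv T (fun s => ∫ u in (0:ℝ)..s, f u) t := by
  have hconv := operatorConv_causalConv (k := fun _ => 1) hT
    (fun _ _ => intervalIntegrable_const) hf ht
  simp only [funext fun s => show causalConv (fun _ => 1) f s = ∫ u in (0:ℝ)..s, f u by
    simp only [causalConv, one_smul]] at hconv
  simpa only [causalConv, one_smul] using hconv.symm

theorem integral_causalConv (hk : ∀ a b, IntervalIntegrable k volume a b) (hf : Continuous f)
    (ht : 0 ≤ t) :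
    ∫ τ in (0:ℝ)..t, causalConv k f τ = causalConv k (fun s => ∫ u in (0:ℝ)..s, f u) t := by
  have hid (h : ℝ → E) :
      operatorConv (fun _ => ContinuousLinearMap.id ℝ E) h = fun s => ∫ u in (0:ℝ)..s, h u :=
    funext fun s => by simp [operatorConv]
  simpa only [hid] using operatorConv_causalConv (T := fun _ => ContinuousLinearMap.id ℝ E)
    (fun _ => continuous_const) hk hf ht

theorem causalConv_integral_left (hk : IntervalIntegrable k volume 0 t) (hf : Continuous f)
    (ht : 0 ≤ t) :
    causalConv (fun s => ∫ u in (0:ℝ)..s, k u) f t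
      = causalConv k (fun s => ∫ u in (0:ℝ)..s, f u) t := by
  simpa [operatorConv, causalConv, intervalIntegral.integral_smul_const] using
    integral_causalConv_apply (T := fun _ => ContinuousLinearMap.id ℝ E)
      (fun _ => continuous_const) hk hf ht

end RealScalars

section FractionalKernel

variable {β : ℝ}

theorem intervalIntegrable_g (hβ : 0 < β) (a b : ℝ) : IntervalIntegrable (g β) volume a b :=
  (intervalIntegral.intervalIntegrable_rpow' (by linarith)).div_const _

theorem integral_g (hβ : 0 < β) (t : ℝ) : ∫ s in (0:ℝ)..t, g β s = g (β + 1) t := by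
  simp only [g]
  rw [intervalIntegral.integral_div, integral_rpow (Or.inl (by linarith)),
    Real.Gamma_add_one hβ.ne', sub_add_cancel, add_sub_cancel_right, Real.zero_rpow hβ.ne',
    sub_zero, div_div]

theorem mul_g (hβ : 0 < β) {t : ℝ} (ht : 0 ≤ t) : t * g β t = β * g (β + 1) t := by
  have hpow : t ^ β = t * t ^ (β - 1) := by
    rw [← Real.rpow_one_add' ht (by simpa using hβ.ne'), add_sub_cancel]
  have hΓ : Real.Gamma β ≠ 0 := (Real.Gamma_pos_of_pos hβ).ne'
  rw [g, g, Real.Gamma_add_one hβ.ne', add_sub_cancel_right, hpow]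
  field_simp

variable {E : Type*} [NormedAddCommGroup E] [NormedSpace ℝ E] {h : ℝ → E} {t : ℝ}

theorem causalConv_g_add_one [CompleteSpace E] (hβ : 0 < β) (hh : Continuous h) (ht : 0 ≤ t) :
    causalConv (g (β + 1)) h t = ∫ τ in (0:ℝ)..t, causalConv (g β) h τ := by
  rw [integral_causalConv (intervalIntegrable_g hβ) hh ht,
    ← causalConv_integral_left (intervalIntegrable_g hβ 0 t) hh ht]
  simp only [integral_g hβ]

theorem causalConv_g_id_smul [CompleteSpace E] (hβ : 0 < β) (hh : Continuous h) (ht : 0 ≤ t) :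
    causalConv (g β) (fun s => s • h s) t
      = t • causalConv (g β) h t - β • ∫ τ in (0:ℝ)..t, causalConv (g β) h τ := by
  rw [← causalConv_g_add_one hβ hh ht, eq_sub_iff_add_eq, ← causalConv_smul, ← causalConv_smul]
  simp only [causalConv]
  rw [← intervalIntegral.integral_add
    (intervalIntegrable_smul_of_comp_sub (intervalIntegrable_g hβ 0 t) (by fun_prop))
    (intervalIntegrable_smul_of_comp_sub (intervalIntegrable_g (add_pos hβ one_pos) 0 t)
      (by fun_prop))]
  refine intervalIntegral.integral_congr fun s hs => ?_
  rw [uIcc_of_le ht] at hs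
  have hg : (t - s) * g β (t - s) = β * g (β + 1) (t - s) := mul_g hβ (sub_nonneg.2 hs.2)
  simp only [smul_smul, ← add_smul]
  congr 1
  linear_combination -hg

end FractionalKernel

section ClosedOperators

theorem intervalIntegral_mem_of_isClosed {E : Type*} [NormedAddCommGroup E] [NormedSpace ℝ E]
    [CompleteSpace E] {p : Submodule ℝ E} (hp : IsClosed (p : Set E)) {a b : ℝ} {f : ℝ → E}
    (hf : IntervalIntegrable f volume a b) (hmem : ∀ s ∈ uIcc a b, f s ∈ p) :
    ∫ s in a..b, f s ∈ p := by
  have : IsClosed (p : Set E) := hp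
  have hq : ∀ s ∈ uIcc a b, p.mkQL (f s) = 0 := fun s hs =>
    (Submodule.Quotient.mk_eq_zero p).2 (hmem s hs)
  have hint : p.mkQL (∫ s in a..b, f s) = 0 := by
    rw [← p.mkQL.intervalIntegral_comp_comm hf, intervalIntegral.integral_congr hq,
      intervalIntegral.integral_zero]
  exact (Submodule.Quotient.mk_eq_zero p).1 hint

variable {𝕜 E F : Type*} [RCLike 𝕜] [NormedAddCommGroup E] [NormedSpace 𝕜 E]
  [NormedAddCommGroup F] [NormedSpace 𝕜 F]

theorem intervalIntegral_prodMk_mem_graph [NormedSpace ℝ E] [IsScalarTower ℝ 𝕜 E] [CompleteSpace E]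
    [NormedSpace ℝ F] [IsScalarTower ℝ 𝕜 F] [CompleteSpace F]
    {A : E →ₗ.[𝕜] F} (hA : IsClosed (A.graph : Set (E × F))) {a b : ℝ} {u : ℝ → E} {v : ℝ → F}
    (hu : IntervalIntegrable u volume a b) (hv : IntervalIntegrable v volume a b)
    (hmem : ∀ s ∈ uIcc a b, (u s, v s) ∈ A.graph) :
    (∫ s in a..b, u s, ∫ s in a..b, v s) ∈ A.graph := by
  have hpair : IntervalIntegrable (fun s => (u s, v s)) volume a b :=
    ⟨hu.1.prodMk hv.1, hu.2.prodMk hv.2⟩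
  have hint : (∫ s in a..b, u s, ∫ s in a..b, v s) = ∫ s in a..b, (u s, v s) :=
    Prod.ext ((ContinuousLinearMap.fst ℝ E F).intervalIntegral_comp_comm hpair)
      ((ContinuousLinearMap.snd ℝ E F).intervalIntegral_comp_comm hpair)
  rw [hint]
  exact intervalIntegral_mem_of_isClosed (p := A.graph.restrictScalars ℝ) hA hpair hmem

theorem exists_mem_graph_norm_le_of_dense_domain [CompleteSpace F] {A : E →ₗ.[𝕜] F}
    (hA : IsClosed (A.graph : Set (E × F))) (hdense : Dense (A.domain : Set E))
    {P : E →L[𝕜] E} {Q : F →L[𝕜] F} {M : ℝ}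
    (hPQ : ∀ y w, (y, w) ∈ A.graph → (P y, Q w) ∈ A.graph)
    (hbound : ∀ y w, (y, w) ∈ A.graph → ‖Q w‖ ≤ M * ‖y‖) (x : E) :
    ∃ z, (P x, z) ∈ A.graph ∧ ‖z‖ ≤ M * ‖x‖ := by
  let QA : A.domain →ₗ[𝕜] F := Q.toLinearMap ∘ₗ A.toFun
  have hnorm (y : A.domain) : ‖QA y‖ ≤ M * ‖A.domain.subtype y‖ := hbound _ _ (A.mem_graph y)
  have hrange : DenseRange A.domain.subtype := hdense.denseRange_val
  refine ⟨QA.extendOfNorm A.domain.subtype x, ?_,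
    LinearMap.norm_extendOfNorm_apply_le hrange M hnorm x⟩
  refine hrange.induction_on (p := fun x => (P x, QA.extendOfNorm A.domain.subtype x) ∈ A.graph) x
    (hA.preimage (by fun_prop)) fun y => ?_
  rw [LinearMap.extendOfNorm_eq hrange ⟨M, hnorm⟩]
  exact hPQ _ _ (A.mem_graph y)

end ClosedOperators

section ResolventFamilies

theorem eqOn_Ioi_of_integral_eq {E : Type*} [NormedAddCommGroup E] [NormedSpace ℝ E]
    [CompleteSpace E] {f₁ f₂ : ℝ → E} (hf₁ : Continuous f₁) (hf₂ : Continuous f₂) {a : ℝ}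
    (h : ∀ t, a < t → ∫ s in a..t, f₁ s = ∫ s in a..t, f₂ s) : EqOn f₁ f₂ (Ioi a) := by
  intro t ht
  refine ((hf₁.integral_hasStrictDerivAt a t).hasDerivAt.congr_of_eventuallyEq ?_).unique
    (hf₂.integral_hasStrictDerivAt a t).hasDerivAt
  filter_upwards [Ioi_mem_nhds ht] with τ hτ using (h τ hτ).symm

variable {X : Type*} [NormedAddCommGroup X] [NormedSpace ℂ X]

/-- `S` is an `α`-times resolvent family generated by `A`. Only the values `S t` with `0 ≤ t` are
constrained, and the action of `A` is expressed through pairs `(x, A x)` in its graph. -/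
structure IsResolventFamily (α : ℝ) (A : X →ₗ.[ℂ] X) (S : ℝ → X →L[ℂ] X) : Prop where
  continuousOn (x : X) : ContinuousOn (fun t => S t x) (Ici 0)
  map_zero : S 0 = 1
  mem_graph {t : ℝ} (ht : 0 ≤ t) {x y : X} (hxy : (x, y) ∈ A.graph) : (S t x, S t y) ∈ A.graph
  eq_add_causalConv {t : ℝ} (ht : 0 ≤ t) {x y : X} (hxy : (x, y) ∈ A.graph) :
    S t x = x + causalConv (g α) (fun s => S s y) t

namespace IsResolventFamily

variable {α : ℝ} {A : X →ₗ.[ℂ] X} {S : ℝ → X →L[ℂ] X}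

theorem continuous_comp_max_zero (hS : IsResolventFamily α A S) (x : X) :
    Continuous fun t => S (max t 0) x :=
  (hS.continuousOn x).comp_continuous (by fun_prop) fun t => le_max_right t 0

theorem comp_max_zero (hS : IsResolventFamily α A S) :
    IsResolventFamily α A fun t => S (max t 0) where
  continuousOn x := (hS.continuous_comp_max_zero x).continuousOn
  map_zero := by simpa using hS.map_zero
  mem_graph _ _ _ hxy := hS.mem_graph (le_max_right _ _) hxy
  eq_add_causalConv {t} ht x y hxy := by
    rw [max_eq_left ht, hS.eq_add_causalConv ht hxy]
    exact congrArg (x + ·) (causalConv_congr (fun s hs => by simp only [max_eq_left hs.1]) ht)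

variable [CompleteSpace X] {t : ℝ} {y w : X}

theorem causalConv_mem_graph (hS : IsResolventFamily α A S) (hcont : ∀ x, Continuous fun t => S t x)
    (hA : IsClosed (A.graph : Set (X × X))) {k : ℝ → ℝ} (hk : IntervalIntegrable k volume 0 t)
    (hyw : (y, w) ∈ A.graph) (ht : 0 ≤ t) :
    (causalConv k (fun s => S s y) t, causalConv k (fun s => S s w) t) ∈ A.graph := by
  refine intervalIntegral_prodMk_mem_graph hA (intervalIntegrable_smul_of_comp_sub hk (hcont y))
    (intervalIntegrable_smul_of_comp_sub hk (hcont w)) fun s hs => ?_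
  rw [uIcc_of_le ht] at hs
  exact (A.graph.restrictScalars ℝ).smul_mem _ (hS.mem_graph hs.1 hyw)

theorem integral_mem_graph (hS : IsResolventFamily α A S) (hcont : ∀ x, Continuous fun t => S t x)
    (hA : IsClosed (A.graph : Set (X × X))) (hyw : (y, w) ∈ A.graph) (ht : 0 ≤ t) :
    (∫ s in (0:ℝ)..t, S s y, ∫ s in (0:ℝ)..t, S s w) ∈ A.graph := by
  simpa only [causalConv, one_smul] using
    hS.causalConv_mem_graph hcont hA (k := fun _ => 1) intervalIntegrable_const hyw ht

/-- Variation of constants for the Volterra equation `v = f + g_α * A v`. -/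
theorem integral_eq_operatorConv (hS : IsResolventFamily α A S) (hα : 0 < α)
    (hcont : ∀ x, Continuous fun t => S t x) {v Av : ℝ → X} (hv : Continuous v)
    (hAv : Continuous Av) (hmem : ∀ b, 0 ≤ b → (v b, Av b) ∈ A.graph) (ht : 0 ≤ t) :
    ∫ b in (0:ℝ)..t, v b = operatorConv S (fun b => v b - causalConv (g α) Av b) t := by
  have hg := intervalIntegrable_g hα
  have hSc := continuous_uncurry_of_strongly_continuous hcont
  have hSv : Continuous fun b => S (t - b) (v b) := hSc.comp₂ (by fun_prop) hv
  have hconv : EqOn (fun b => S (t - b) (v b) - v b)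
      (fun b => causalConv (g α) (fun s => S s (Av b)) (t - b)) (uIcc 0 t) := fun b hb => by
    rw [uIcc_of_le ht] at hb
    exact sub_eq_of_eq_add' (hS.eq_add_causalConv (sub_nonneg.2 hb.2) (hmem b hb.1))
  calc ∫ b in (0:ℝ)..t, v b
      = (∫ b in (0:ℝ)..t, S (t - b) (v b)) - ∫ b in (0:ℝ)..t, (S (t - b) (v b) - v b) := by
        rw [intervalIntegral.integral_sub (hSv.intervalIntegrable 0 t)
          (hv.intervalIntegrable 0 t), sub_sub_cancel]
    _ = operatorConv S v t - operatorConv S (causalConv (g α) Av) t := by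
        rw [intervalIntegral.integral_congr hconv, integral_causalConv_apply hcont (hg 0 t) hAv ht,
          operatorConv_causalConv hcont hg hAv ht, operatorConv_eq_integral_comp_sub S v]
    _ = operatorConv S (fun b => v b - causalConv (g α) Av b) t :=
        (operatorConv_sub hcont hv (continuous_causalConv hg hAv) t).symm

theorem id_smul_sub_causalConv (hS : IsResolventFamily α A S) (hα : 0 < α)
    (hcont : ∀ x, Continuous fun t => S t x) (hyw : (y, w) ∈ A.graph) (ht : 0 ≤ t) :
    (t • S t y + (α - 1) • ∫ s in (0:ℝ)..t, S s y)
        - causalConv (g α) (fun b => b • S b w + (α - 1) • ∫ s in (0:ℝ)..b, S s w) t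
      = α • ∫ s in (0:ℝ)..t, S s y := by
  have hg := intervalIntegrable_g hα
  have hSw := hcont w
  have hconv {τ : ℝ} (hτ : 0 ≤ τ) : causalConv (g α) (fun s => S s w) τ = S τ y - y :=
    eq_sub_of_add_eq' (hS.eq_add_causalConv hτ hyw).symm
  have hconv_int : ∫ τ in (0:ℝ)..t, causalConv (g α) (fun s => S s w) τ
      = (∫ s in (0:ℝ)..t, S s y) - t • y := by
    have hEqOn : EqOn (causalConv (g α) fun s => S s w) (fun τ => S τ y - y) (uIcc 0 t) :=
      fun τ hτ => hconv (uIcc_of_le ht ▸ hτ).1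
    rw [intervalIntegral.integral_congr hEqOn,
      intervalIntegral.integral_sub ((hcont y).intervalIntegrable 0 t) intervalIntegrable_const]
    simp
  rw [causalConv_add (hg 0 t) (by fun_prop) (by fun_prop), causalConv_smul,
    ← integral_causalConv hg hSw ht, causalConv_g_id_smul hα hSw ht, hconv ht, hconv_int]
  module

theorem id_smul_add_integral_eq_operatorConv (hS : IsResolventFamily α A S) (hα : 0 < α)
    (hcont : ∀ x, Continuous fun t => S t x) (hA : IsClosed (A.graph : Set (X × X)))
    (hyw : (y, w) ∈ A.graph) (ht : 0 < t) :
    t • S t y + (α - 1) • ∫ s in (0:ℝ)..t, S s y = α • operatorConv S (fun s => S s y) t := by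
  have hSy := hcont y
  have hSw := hcont w
  refine eqOn_Ioi_of_integral_eq (a := 0)
    (f₁ := fun t => t • S t y + (α - 1) • ∫ s in (0:ℝ)..t, S s y)
    (f₂ := fun t => α • operatorConv S (fun s => S s y) t) (by fun_prop)
    ((continuous_operatorConv hcont hSy).const_smul α) (fun t ht => ?_) ht
  have hmem (b : ℝ) (hb : 0 ≤ b) : (b • S b y + (α - 1) • ∫ s in (0:ℝ)..b, S s y,
      b • S b w + (α - 1) • ∫ s in (0:ℝ)..b, S s w) ∈ A.graph :=
    (A.graph.restrictScalars ℝ).add_mem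
      ((A.graph.restrictScalars ℝ).smul_mem b (hS.mem_graph hb hyw))
      ((A.graph.restrictScalars ℝ).smul_mem (α - 1) (hS.integral_mem_graph hcont hA hyw hb))
  rw [hS.integral_eq_operatorConv hα hcont (by fun_prop) (by fun_prop) hmem ht.le,
    operatorConv_congr (fun b hb => hS.id_smul_sub_causalConv hα hcont hyw hb.1) ht.le,
    operatorConv_smul, ← integral_operatorConv hcont hSy ht.le, intervalIntegral.integral_smul]

theorem hasDerivAt (hS : IsResolventFamily α A S) (hα : 1 < α)
    (hcont : ∀ x, Continuous fun t => S t x) (hyw : (y, w) ∈ A.graph) (ht : 0 < t) :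
    HasDerivAt (fun τ => S τ y) (Pa α S t w) t := by
  have hβ : 0 < α - 1 := sub_pos.2 hα
  have hPa : Continuous (causalConv (g (α - 1)) fun s => S s w) :=
    continuous_causalConv (intervalIntegrable_g hβ) (hcont w)
  refine ((hPa.integral_hasStrictDerivAt 0 t).hasDerivAt.const_add y).congr_of_eventuallyEq ?_
  filter_upwards [lt_mem_nhds ht] with τ hτ
  rw [hS.eq_add_causalConv hτ.le hyw, ← causalConv_g_add_one hβ (hcont w) hτ.le, sub_add_cancel]

theorem hasDerivAt_operatorConv (hS : IsResolventFamily α A S) (hα : 1 < α)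
    (hcont : ∀ x, Continuous fun t => S t x) (hA : IsClosed (A.graph : Set (X × X)))
    (hyw : (y, w) ∈ A.graph) (ht : 0 < t) :
    HasDerivAt (operatorConv S fun s => S s y) (S t y + (t / α) • Pa α S t w) t := by
  have hα₀ : 0 < α := one_pos.trans hα
  have hderiv := (((hasDerivAt_id t).smul (hS.hasDerivAt hα hcont hyw ht)).add
    (((hcont y).integral_hasStrictDerivAt 0 t).hasDerivAt.const_smul (α - 1))).const_smul α⁻¹
  have hval : S t y + (t / α) • Pa α S t w
      = α⁻¹ • (id t • Pa α S t w + (1:ℝ) • S t y + (α - 1) • S t y) := by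
    match_scalars <;> simp <;> field_simp
  rw [hval]
  refine hderiv.congr_of_eventuallyEq ?_
  filter_upwards [lt_mem_nhds ht] with τ hτ
  exact (eq_inv_smul_iff₀ hα₀.ne').2
    (hS.id_smul_add_integral_eq_operatorConv hα₀ hcont hA hyw hτ).symm

end IsResolventFamily

end ResolventFamilies

section Semivariation

variable {𝕜 E F : Type*} [RCLike 𝕜] [NormedAddCommGroup E] [NormedSpace 𝕜 E]
  [NormedAddCommGroup F] [NormedSpace 𝕜 F]

/-- The semivariation of `G` on `[0, r]` is at most `C`. The sequences `d` and `x` are total, but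
only `d 0, …, d n` and `x 0, …, x (n - 1)` enter the sum. -/
def SemivariationLE (G : ℝ → E →L[𝕜] F) (r C : ℝ) : Prop :=
  ∀ (n : ℕ) (d : ℕ → ℝ) (x : ℕ → E),
    d 0 = 0 → d n = r → (∀ i < n, d i < d (i + 1)) → (∀ i, ‖x i‖ ≤ 1) →
    ‖∑ i ∈ Finset.range n, (G (d (i + 1)) - G (d i)) (x i)‖ ≤ C

namespace SemivariationLE

variable {G : ℝ → E →L[𝕜] F} {r C : ℝ}

theorem mono {C' : ℝ} (hG : SemivariationLE G r C) (hC : C ≤ C') : SemivariationLE G r C' :=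
  fun n d x h0 hn hd hx => (hG n d x h0 hn hd hx).trans hC

theorem congr {G' : ℝ → E →L[𝕜] F} (hG : SemivariationLE G r C) (h : EqOn G G' (Icc 0 r)) :
    SemivariationLE G' r C := by
  intro n d x h0 hn hd hx
  have hmono : StrictMonoOn d (Iic n) :=
    strictMonoOn_of_lt_add_one ordConnected_Iic fun i _ _ hi => hd i (Nat.lt_of_succ_le hi)
  have hmem {i : ℕ} (hi : i ≤ n) : d i ∈ Icc 0 r :=
    ⟨h0 ▸ hmono.monotoneOn (Nat.zero_le n) hi (Nat.zero_le i),
      hn ▸ hmono.monotoneOn hi self_mem_Iic hi⟩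
  convert hG n d x h0 hn hd hx using 3 with i hi
  have hi : i < n := Finset.mem_range.1 hi
  rw [h (hmem hi), h (hmem hi.le)]

theorem norm_sum_le_of_mem_Ioo (hG : SemivariationLE G r C) {n : ℕ} {e : ℕ → ℝ} {x : ℕ → E}
    (h0 : 0 < e 0) (he : ∀ i < n, e i < e (i + 1)) (hn : e n < r) (hx : ∀ i < n, ‖x i‖ ≤ 1) :
    ‖∑ i ∈ Finset.range n, (G (e (i + 1)) - G (e i)) (x i)‖ ≤ C := by
  let d : ℕ → ℝ
    | 0 => 0
    | i + 1 => if i ≤ n then e i else r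
  let x' : ℕ → E
    | 0 => 0
    | i + 1 => if i < n then x i else 0
  have hd : ∀ i < n + 2, d i < d (i + 1) := by
    rintro (_ | i) hi
    · simpa [d] using h0
    · rcases (Nat.lt_succ_iff.1 (Nat.lt_of_succ_lt_succ hi)).eq_or_lt with rfl | hi
      · simpa [d] using hn
      · simpa [d, hi.le, Nat.succ_le_of_lt hi] using he i hi
  have hx' : ∀ i, ‖x' i‖ ≤ 1 := by
    rintro (_ | i)
    · simp [x']
    · by_cases hi : i < n <;> simp [x', hi, hx]
  have hsum := hG (n + 2) d x' rfl (by simp [d]) hd hx'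
  rw [Finset.sum_range_succ', Finset.sum_range_succ] at hsum
  simp only [x', lt_irrefl, if_false, map_zero, add_zero] at hsum
  convert hsum using 3 with i hi
  have hi : i < n := Finset.mem_range.1 hi
  simp [d, hi, hi.le, Nat.succ_le_of_lt hi]

theorem norm_sum_le_mul_of_mem_Ioo (hG : SemivariationLE G r C) {n : ℕ} {e : ℕ → ℝ} {x : ℕ → E}
    {B : ℝ} (hB : 0 ≤ B) (h0 : 0 < e 0) (he : ∀ i < n, e i < e (i + 1)) (hn : e n < r)
    (hx : ∀ i < n, ‖x i‖ ≤ B) :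
    ‖∑ i ∈ Finset.range n, (G (e (i + 1)) - G (e i)) (x i)‖ ≤ C * B := by
  rcases hB.eq_or_lt with rfl | hB
  · have hzero : ∀ i ∈ Finset.range n, (G (e (i + 1)) - G (e i)) (x i) = 0 := fun i hi => by
      rw [norm_le_zero_iff.1 (hx i (Finset.mem_range.1 hi)), map_zero]
    rw [Finset.sum_eq_zero hzero, norm_zero, mul_zero]
  · have hnorm : ‖((B⁻¹ : ℝ) : 𝕜)‖ = B⁻¹ := RCLike.norm_of_nonneg (inv_nonneg.2 hB.le)
    have hscaled := hG.norm_sum_le_of_mem_Ioo (x := fun i => ((B⁻¹ : ℝ) : 𝕜) • x i) h0 he hn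
      fun i hi => by
        rw [norm_smul, hnorm, inv_mul_le_iff₀ hB, mul_one]
        exact hx i hi
    simp only [map_smul] at hscaled
    rwa [← Finset.smul_sum, norm_smul, hnorm, inv_mul_le_iff₀ hB, mul_comm] at hscaled

end SemivariationLE

theorem integral_eq_integral_sum_comp_add_mul {E : Type*} [NormedAddCommGroup E] [NormedSpace ℝ E]
    {q : ℝ → E} (hq : Continuous q) (n : ℕ) (h : ℝ) :
    ∫ s in (0:ℝ)..(n * h), q s = ∫ s in (0:ℝ)..h, ∑ i ∈ Finset.range n, q (s + i * h) := by
  have hsum := intervalIntegral.sum_integral_adjacent_intervals (f := q) (μ := volume)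
    (a := fun i : ℕ => (i : ℝ) * h) (n := n) fun i _ => hq.intervalIntegrable _ _
  rw [Nat.cast_zero, zero_mul] at hsum
  have hint (i : ℕ) : IntervalIntegrable (fun s => q (s + i * h)) volume 0 h :=
    (by fun_prop : Continuous fun s => q (s + i * h)).intervalIntegrable 0 h
  rw [← hsum, intervalIntegral.integral_finsetSum fun i _ => hint i]
  refine Finset.sum_congr rfl fun i _ => ?_
  rw [intervalIntegral.integral_comp_add_right q, zero_add, Nat.cast_succ, add_one_mul, add_comm h]

variable [NormedSpace ℝ F] [CompleteSpace E] {T : ℝ → E →L[𝕜] F} {f : ℝ → E} {r C B t : ℝ}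

theorem operatorConv_sub_operatorConv_sub (hT : ∀ x, Continuous fun t => T t x)
    (hf : Continuous f) (t h : ℝ) :
    operatorConv T f t - operatorConv T f (t - h) - ∫ s in (0:ℝ)..h, T s (f (t - s))
      = ∫ s in (0:ℝ)..(t - h), (T (s + h) - T s) (f (t - h - s)) := by
  have hTc := continuous_uncurry_of_strongly_continuous hT
  have hint (τ : ℝ) : Continuous fun s => T s (f (τ - s)) := hTc.comp₂ continuous_id (by fun_prop)
  have hshift :
      ∫ s in (0:ℝ)..(t - h), T (s + h) (f (t - h - s)) = ∫ s in h..t, T s (f (t - s)) := by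
    simpa [sub_sub, add_comm h] using
      intervalIntegral.integral_comp_add_right (fun s => T s (f (t - s))) h (a := 0) (b := t - h)
  have hsplit := intervalIntegral.integral_add_adjacent_intervals
    ((hint t).intervalIntegrable (μ := volume) 0 h) ((hint t).intervalIntegrable h t)
  have hint_shift : Continuous fun s => T (s + h) (f (t - h - s)) :=
    hTc.comp₂ (by fun_prop) (by fun_prop)
  simp only [sub_apply]
  rw [intervalIntegral.integral_sub (hint_shift.intervalIntegrable _ _)
    ((hint (t - h)).intervalIntegrable _ _), hshift, operatorConv, ← hsplit, operatorConv]
  abel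

namespace SemivariationLE

theorem norm_operatorConv_sub_le (hT : SemivariationLE T r C)
    (hcont : ∀ x, Continuous fun t => T t x) (hf : Continuous f) (hB : ∀ s ∈ Icc 0 t, ‖f s‖ ≤ B)
    (ht : 0 < t) (htr : t ≤ r) {h : ℝ} {n : ℕ} (hh : (n + 1) * h = t) :
    ‖operatorConv T f t - operatorConv T f (t - h) - ∫ s in (0:ℝ)..h, T s (f (t - s))‖
      ≤ C * B * h := by
  have hh₀ : 0 < h := pos_of_mul_pos_right (hh ▸ ht) (by positivity)
  have hB₀ : 0 ≤ B := (norm_nonneg _).trans (hB t ⟨ht.le, le_rfl⟩)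
  have hth : t - h = n * h := by linarith
  have hTc := continuous_uncurry_of_strongly_continuous hcont
  have hq : Continuous fun s => (T (s + h) - T s) (f (n * h - s)) :=
    (hTc.comp₂ (by fun_prop : Continuous (· + h)) (by fun_prop)).sub
      (hTc.comp₂ continuous_id (by fun_prop))
  have bound : ∀ s ∈ Ioo 0 h, ‖∑ i ∈ Finset.range n,
      (T (s + i * h + h) - T (s + i * h)) (f (n * h - (s + i * h)))‖ ≤ C * B := by
    intro s hs
    have hsum := hT.norm_sum_le_mul_of_mem_Ioo (n := n) (e := fun i => s + i * h)
      (x := fun i => f (n * h - (s + i * h))) hB₀ (by simpa using hs.1)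
      (fun i _ => by push_cast; linarith) (by linarith [hs.2]) fun i hi => hB _ ?_
    · simpa only [Nat.cast_succ, add_one_mul, add_assoc] using hsum
    · have hin : ((i : ℝ) + 1) * h ≤ n * h := by gcongr; exact_mod_cast hi
      have : 0 ≤ (i : ℝ) * h := by positivity
      constructor <;> linarith [hs.1, hs.2]
  rw [operatorConv_sub_operatorConv_sub hcont hf, hth, integral_eq_integral_sum_comp_add_mul hq]
  refine (intervalIntegral.norm_integral_le_of_norm_le_const_ae (C := C * B) ?_).trans_eq
    (by rw [sub_zero, abs_of_pos hh₀])
  filter_upwards [Measure.ae_ne volume h] with s hsh hs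
  rw [uIoc_of_le hh₀.le] at hs
  exact bound s ⟨hs.1, hs.2.lt_of_ne hsh⟩

theorem norm_deriv_operatorConv_sub_le [CompleteSpace F] (hT : SemivariationLE T r C)
    (hcont : ∀ x, Continuous fun t => T t x) (hf : Continuous f) (hB : ∀ s ∈ Icc 0 t, ‖f s‖ ≤ B)
    (ht : 0 < t) (htr : t ≤ r) {L : F} (hL : HasDerivAt (operatorConv T f) L t) :
    ‖L - T 0 (f t)‖ ≤ C * B := by
  have hTc := continuous_uncurry_of_strongly_continuous hcont
  have hint : Continuous fun s => T s (f (t - s)) := hTc.comp₂ continuous_id (by fun_prop)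
  have hint_deriv : HasDerivAt (fun h => ∫ s in (0:ℝ)..h, T s (f (t - s))) (T 0 (f t)) 0 := by
    simpa only [sub_zero] using (hint.integral_hasStrictDerivAt 0 0).hasDerivAt
  have hconv_deriv : HasDerivAt (fun h => operatorConv T f (t - h)) (-L) 0 :=
    HasDerivAt.comp_const_sub t 0 (by simpa only [sub_zero] using hL)
  have hderiv := (hconv_deriv.const_sub (operatorConv T f t)).sub hint_deriv
  rw [neg_neg] at hderiv
  let h (n : ℕ) : ℝ := t / (n + 1)
  have hh_pos (n : ℕ) : 0 < h n := by positivity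
  have hh : Filter.Tendsto h Filter.atTop (nhdsWithin 0 {0}ᶜ) :=
    tendsto_nhdsWithin_iff.2 ⟨(tendsto_const_div_atTop_nhds_zero_nat t).comp
      (Filter.tendsto_add_atTop_nat 1) |>.congr fun n => by simp [h],
      .of_forall fun n => (hh_pos n).ne'⟩
  refine le_of_tendsto (hderiv.tendsto_slope_zero.comp hh).norm (.of_forall fun n => ?_)
  have hdiff := hT.norm_operatorConv_sub_le hcont hf hB ht htr (h := h n) (n := n)
    (by simp only [h]; field_simp)
  simpa [norm_smul, abs_of_pos (hh_pos n), inv_mul_le_iff₀ (hh_pos n), mul_comm (h n)] using hdiff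

end SemivariationLE

end Semivariation

section ResolventBound

variable {X : Type*} [NormedAddCommGroup X] [NormedSpace ℂ X]

namespace IsResolventFamily

variable {α r C t : ℝ} {A : X →ₗ.[ℂ] X} {S : ℝ → X →L[ℂ] X} [CompleteSpace X]

theorem norm_smul_Pa_le (hS : IsResolventFamily α A S) (hα : 1 < α)
    (hcont : ∀ x, Continuous fun t => S t x) (hA : IsClosed (A.graph : Set (X × X)))
    (hvar : SemivariationLE S r C) {K : ℝ} (hK : ∀ s ∈ Icc 0 r, ‖S s‖ ≤ K) {y w : X}
    (hyw : (y, w) ∈ A.graph) (ht : 0 < t) (htr : t ≤ r) :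
    ‖t • Pa α S t w‖ ≤ α * (C * K) * ‖y‖ := by
  have hα₀ : 0 < α := one_pos.trans hα
  have hbound := hvar.norm_deriv_operatorConv_sub_le hcont (hcont y) (B := K * ‖y‖)
    (fun s hs => (S s).le_of_opNorm_le (hK s ⟨hs.1, hs.2.trans htr⟩) y) ht htr
    (hS.hasDerivAt_operatorConv hα hcont hA hyw ht)
  rw [hS.map_zero, one_apply_eq_self, add_sub_cancel_left] at hbound
  calc ‖t • Pa α S t w‖ = α * ‖(t / α) • Pa α S t w‖ := by
        rw [← Real.norm_of_nonneg hα₀.le, ← norm_smul, smul_smul, Real.norm_of_nonneg hα₀.le,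
          mul_div_cancel₀ _ hα₀.ne']
    _ ≤ α * (C * (K * ‖y‖)) := by gcongr
    _ = α * (C * K) * ‖y‖ := by ring

theorem exists_Pa_mem_graph_norm_smul_le (hS : IsResolventFamily α A S) (hα : 1 < α)
    (hcont : ∀ x, Continuous fun t => S t x) (hA : IsClosed (A.graph : Set (X × X)))
    (hdense : Dense (A.domain : Set X)) (hvar : SemivariationLE S r C) {K : ℝ}
    (hK : ∀ s ∈ Icc 0 r, ‖S s‖ ≤ K) (ht : 0 < t) (htr : t ≤ r) (x : X) :
    ∃ z, (Pa α S t x, z) ∈ A.graph ∧ ‖t • z‖ ≤ α * (C * K) * ‖x‖ := by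
  have norm_smul_t (z : X) : ‖t • z‖ = t * ‖z‖ := by rw [norm_smul, Real.norm_of_nonneg ht.le]
  have hg := intervalIntegrable_g (sub_pos.2 hα) 0 t
  obtain ⟨P, hP⟩ := exists_continuousLinearMap_eq_causalConv hcont hg ht.le
  have hbound (y w : X) (hyw : (y, w) ∈ A.graph) : ‖P w‖ ≤ t⁻¹ * (α * (C * K)) * ‖y‖ := by
    rw [mul_assoc, le_inv_mul_iff₀ ht, ← norm_smul_t, hP]
    exact hS.norm_smul_Pa_le hα hcont hA hvar hK hyw ht htr
  obtain ⟨z, hz, hzx⟩ := exists_mem_graph_norm_le_of_dense_domain hA hdense (P := P) (Q := P)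
    (fun y w hyw => by simpa only [hP] using hS.causalConv_mem_graph hcont hA hg hyw ht.le) hbound x
  rw [hP] at hz
  exact ⟨z, hz, by rwa [norm_smul_t, ← le_inv_mul_iff₀ ht, ← mul_assoc]⟩

end IsResolventFamily

end ResolventBound

theorem stmt_16_general {X : Type*} [NormedAddCommGroup X] [NormedSpace ℂ X] [CompleteSpace X]
    {α : ℝ} (hα : 1 < α) {A : X →ₗ.[ℂ] X} (hA : IsClosed (A.graph : Set (X × X)))
    (hdense : Dense (A.domain : Set X)) {S : ℝ → X →L[ℂ] X} (hS : IsResolventFamily α A S) {r : ℝ}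
    (hvar : BoundedSemivariation S r) :
    ∃ M : ℝ, ∀ x, ∀ t ∈ Icc 0 r, ∃ z, (Pa α S t x, z) ∈ A.graph ∧ ‖t • z‖ ≤ M * ‖x‖ := by
  obtain ⟨C, hC⟩ : ∃ C, SemivariationLE S r C := hvar
  let T (t : ℝ) : X →L[ℂ] X := S (max t 0)
  have hT : IsResolventFamily α A T := hS.comp_max_zero
  have hST : EqOn S T (Ici 0) := fun s hs => by simp only [T, max_eq_left (mem_Ici.1 hs)]
  have hcont (x : X) : Continuous fun t => T t x := hS.continuous_comp_max_zero x
  obtain ⟨K, hK⟩ := exists_opNorm_le_of_isCompact (isCompact_Icc (a := 0) (b := r))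
    fun x => (hcont x).continuousOn
  refine ⟨α * (max C 0 * K), fun x t ht => ?_⟩
  rcases ht.1.eq_or_lt with rfl | ht₀
  · exact ⟨0, by simp [Pa], by rw [smul_zero, norm_zero]; positivity⟩
  · have hPa : Pa α S t x = Pa α T t x :=
      causalConv_congr (fun s hs => by rw [hST (mem_Ici.2 hs.1)]) ht.1
    rw [hPa]
    exact hT.exists_Pa_mem_graph_norm_smul_le hα hcont hA hdense
      ((hC.mono (le_max_left C 0)).congr (hST.mono Icc_subset_Ici_self)) hK ht₀ ht.2 x

theorem stmt_16
    {X : Type*} [NormedAddCommGroup X] [NormedSpace ℂ X] [CompleteSpace X]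
    (α : ℝ) (hα1 : 1 < α) (hα2 : α < 2)
    (A : X →ₗ.[ℂ] X) (hA_closed : IsClosed (A.graph : Set (X × X)))
    (hA_dense : Dense (A.domain : Set X))
    (S : ℝ → X →L[ℂ] X)
    (hS_cont : ∀ x : X, ContinuousOn (fun t => S t x) (Ici (0:ℝ)))
    (hS_zero : S 0 = 1)
    (hS_dom : ∀ t : ℝ, 0 ≤ t → ∀ x ∈ A.domain, S t x ∈ A.domain)
    (hS_comm : ∀ t : ℝ, 0 ≤ t → ∀ x y : X, (x, y) ∈ A.graph → (S t x, S t y) ∈ A.graph)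
    (hS_eq : ∀ t : ℝ, 0 ≤ t → ∀ x y : X, (x, y) ∈ A.graph →
      S t x = x + ∫ s in (0:ℝ)..t, g α (t - s) • S s y)
    (r : ℝ) (hr : 0 < r) (hsv : BoundedSemivariation S r) :
    ∃ M : ℝ, ∀ (x : X), ∀ t ∈ Icc (0:ℝ) r, ∃ z : X,
      (Pa α S t x, z) ∈ A.graph ∧ ‖t • z‖ ≤ M * ‖x‖ :=
  stmt_16_general hα1 hA_closed hA_dense
    ⟨hS_cont, hS_zero, fun ht => hS_comm _ ht _ _, fun ht => hS_eq _ ht _ _⟩ hsv
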